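/- arXiv:1608.00710 — 2 statements merged into one kernel-verified Lean document; each statement's English description precedes it below -/
import Mathlib

section
/- Let X_1, X_2, … be identically distributed real random variables on a probability space (Ω, ℱ, P) which are extended negatively dependent with some dominating constant K ≥ 1, and set S_n = Σ_{k=1}^n X_k. If P( limsup_{n→∞} |S_n|/n = ∞ ) < 1, then E[|X_1|] < ∞. Furthermore, if P( S_n/n → μ ) > 0 for some real number μ, then E[|X_1|] < ∞, μ = E[X_1], and P( S_n/n → μ ) = 1. -/
open Filter MeasureTheory
open scoped ENNReal NNReal

noncomputable section

/-- Extended negative dependence (classical, on a probability space) with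
dominating constant `K`: the joint lower-left and upper-right tails are
dominated by `K` times the product of the marginal tails. -/
def ENDProb {Ω : Type} [MeasurableSpace Ω] (P : Measure Ω) (K : ℝ)
    (X : ℕ → Ω → ℝ) : Prop :=
  ∀ (n : ℕ) (x : ℕ → ℝ),
    (P (⋂ i ∈ Finset.range n, {ω | X i ω ≤ x i}) ≤
      ENNReal.ofReal K * ∏ i ∈ Finset.range n, P {ω | X i ω ≤ x i}) ∧
    (P (⋂ i ∈ Finset.range n, {ω | x i < X i ω}) ≤
      ENNReal.ofReal K * ∏ i ∈ Finset.range n, P {ω | x i < X i ω})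

/-- `log x = ln(x ∨ e)`. -/
def paperLog (x : ℝ) : ℝ := Real.log (max x (Real.exp 1))

/-- `a_n = √(2 n log log n)` with the above convention for `log`. -/
def lilA (n : ℕ) : ℝ := Real.sqrt (2 * n * paperLog (paperLog n))

/-! Both halves rest on the domination of joint upper tails by `K` times the product of the marginal
ones, for `X` and for `-X`. If `limsup |S_n|/n` is finite with positive probability, then for some
`M` all the events `|X_i| < M (i + 1)` occur together with positive probability. By domination this
probability is at most `K exp (-∑ P(X_i ≤ -M (i + 1)))`, so the tails of `X_1` are summable along
multiples of `M` and `X_1` is integrable.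

Domination extends from tails to products of nonnegative monotone functions of the `X_i`, at the
same cost `K`, hence to exponential moments. Variances are not available, because `K > 1` gives no
bound on covariances; instead an exponential bound for truncated sums, with the exponent tuned to
the truncated second moment, gives tail bounds that are summable along `n = ⌊c ^ k⌋`. Borel–Cantelli
yields the strong law along these subsequences, and monotonicity of the partial sums of the positive
and negative parts, with `c → 1`, fills the gaps. -/

/-- Upper extended negative dependence of a finite family with dominating constant `K`. A sequence
`X` is upper extended negatively dependent when every initial segment `fun i : Fin n => X i` is;
lower tails of `X` are the upper tails of `-X`. -/
def IsUpperEND {Ω ι : Type*} [MeasurableSpace Ω] [Fintype ι] (P : Measure Ω) (K : ℝ≥0)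
    (X : ι → Ω → ℝ) : Prop :=
  ∀ x : ι → ℝ, P (⋂ i, {ω | x i < X i ω}) ≤ K * ∏ i, P {ω | x i < X i ω}

theorem exists_antitone_iUnion_Ioi_eq_of_isUpperSet {U : Set ℝ} (hU : IsUpperSet U)
    (ho : IsOpen U) (hne : U.Nonempty) :
    ∃ x : ℕ → ℝ, Antitone x ∧ ⋃ k, Set.Ioi (x k) = U := by
  by_cases hb : BddBelow U
  · refine ⟨fun _ => sInf U, antitone_const, ?_⟩
    rw [Set.iUnion_const]
    refine Set.Subset.antisymm (fun y hy => ?_) fun y hy => ?_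
    · obtain ⟨u, hu, huy⟩ := exists_lt_of_csInf_lt hne hy
      exact hU huy.le hu
    · obtain ⟨z, hzy, hz⟩ := exists_Ioc_subset_of_mem_nhds (ho.mem_nhds hy) ⟨y - 1, by simp⟩
      obtain ⟨m, hzm, hmy⟩ := exists_between hzy
      exact (csInf_le hb (hz ⟨hzm, hmy.le⟩)).trans_lt hmy
  · refine ⟨fun k => -k, fun m n h => by simpa, ?_⟩
    have huniv : U = Set.univ := Set.eq_univ_of_forall fun y =>
      let ⟨_, hu, huy⟩ := not_bddBelow_iff.1 hb y
      hU huy.le hu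
    rw [huniv, Set.iUnion_eq_univ_iff]
    exact fun y => (exists_nat_gt (-y)).imp fun k hk => neg_lt.1 hk

theorem lintegral_fin_prod_eq_prod_lintegral {n : ℕ} {E : Fin n → Type*}
    [∀ i, MeasurableSpace (E i)] (μ : (i : Fin n) → Measure (E i)) [∀ i, SigmaFinite (μ i)]
    {f : (i : Fin n) → E i → ℝ≥0∞} (hf : ∀ i, Measurable (f i)) :
    ∫⁻ x, ∏ i, f i (x i) ∂Measure.pi μ = ∏ i, ∫⁻ x, f i x ∂μ i := by
  induction n with
  | zero => simp
  | succ n ih =>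
    have hrest : Measurable fun y : (i : Fin n) → E i.succ => ∏ i, f i.succ (y i) :=
      Finset.univ.measurable_fun_prod fun i _ => (hf i.succ).comp (measurable_pi_apply i)
    calc ∫⁻ x, ∏ i, f i (x i) ∂Measure.pi μ
        = ∫⁻ x, (fun p : E 0 × ((i : Fin n) → E i.succ) => f 0 p.1 * ∏ i : Fin n, f i.succ (p.2 i))
            (MeasurableEquiv.piFinSuccAbove E 0 x) ∂Measure.pi μ := by
          simp only [Fin.prod_univ_succ]
          rfl
      _ = ∫⁻ p, f 0 p.1 * ∏ i : Fin n, f i.succ (p.2 i)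
            ∂(μ 0).prod (Measure.pi fun i : Fin n => μ i.succ) :=
          (measurePreserving_piFinSuccAbove μ 0).lintegral_comp
            (((hf 0).comp measurable_fst).mul (hrest.comp measurable_snd))
      _ = ∏ i, ∫⁻ x, f i x ∂μ i := by
          rw [lintegral_prod_mul (hf 0).aemeasurable hrest.aemeasurable, ih _ fun i => hf i.succ,
            Fin.prod_univ_succ]

theorem lintegral_fintype_prod_eq_prod_lintegral {ι : Type*} [Fintype ι] {E : ι → Type*}
    [∀ i, MeasurableSpace (E i)] (μ : (i : ι) → Measure (E i)) [∀ i, SigmaFinite (μ i)]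
    {f : (i : ι) → E i → ℝ≥0∞} (hf : ∀ i, Measurable (f i)) :
    ∫⁻ x, ∏ i, f i (x i) ∂Measure.pi μ = ∏ i, ∫⁻ x, f i x ∂μ i := by
  let e := (Fintype.equivFin ι).symm
  rw [← (measurePreserving_piCongrLeft μ e).lintegral_comp (by fun_prop)]
  simp_rw [← e.prod_comp, MeasurableEquiv.coe_piCongrLeft, Equiv.piCongrLeft_apply_apply]
  exact lintegral_fin_prod_eq_prod_lintegral _ fun i => hf (e i)

section UpperEND

variable {Ω ι : Type*} [MeasurableSpace Ω] [Fintype ι] {P : Measure Ω} {K : ℝ≥0} {X : ι → Ω → ℝ}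

theorem measure_iInter_iUnion_le {A : ι → ℕ → Set Ω} (hA : ∀ i, Monotone (A i))
    (h : ∀ k, P (⋂ i, A i k) ≤ K * ∏ i, P (A i k)) :
    P (⋂ i, ⋃ k, A i k) ≤ K * ∏ i, P (⋃ k, A i k) := by
  have hmono : Monotone fun k => ⋂ i, A i k := fun _ _ hkl =>
    Set.iInter_mono fun i => hA i hkl
  rw [← Set.iUnion_iInter_of_monotone hA, hmono.measure_iUnion]
  refine iSup_le fun k => (h k).trans ?_
  gcongr with i
  exact Set.subset_iUnion _ k

theorem isUpperEND_neg_of_measure_iInter_le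
    (h : ∀ x : ι → ℝ, P (⋂ i, {ω | X i ω ≤ x i}) ≤ K * ∏ i, P {ω | X i ω ≤ x i}) :
    IsUpperEND P K fun i ω => -X i ω := by
  intro x
  obtain ⟨u, hu, hlt, hlim⟩ := exists_seq_strictMono_tendsto (0 : ℝ)
  have hset : ∀ i, {ω | x i < -X i ω} = ⋃ k, {ω | X i ω ≤ -x i + u k} := by
    intro i
    ext ω
    simp only [Set.mem_ofPred_eq, Set.mem_iUnion]
    refine ⟨fun hω => ?_, fun ⟨k, hk⟩ => by linarith [hlt k]⟩
    obtain ⟨k, hk⟩ := (hlim.eventually_const_lt (show X i ω + x i < 0 by linarith)).exists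
    exact ⟨k, by linarith⟩
  simp only [hset]
  refine measure_iInter_iUnion_le (fun i k l hkl ω (hω : X i ω ≤ _) => ?_) fun k => h _
  exact hω.trans (by linarith [hu.monotone hkl])

theorem IsUpperEND.comp (hX : IsUpperEND P K X) {f : ι → ℝ → ℝ} (hf : ∀ i, Monotone (f i))
    (hfc : ∀ i, LowerSemicontinuous (f i)) : IsUpperEND P K fun i ω => f i (X i ω) := by
  intro t
  by_cases hne : ∀ i, {y | t i < f i y}.Nonempty
  · choose x hx hxU using fun i => exists_antitone_iUnion_Ioi_eq_of_isUpperSet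
      (fun _ _ hab hlt => hlt.trans_le (hf i hab)) ((hfc i).isOpen_preimage (t i)) (hne i)
    have hset : ∀ i, {ω | t i < f i (X i ω)} = ⋃ k, {ω | x i k < X i ω} := fun i => by
      change X i ⁻¹' (f i ⁻¹' Set.Ioi (t i)) = _
      rw [← hxU i, Set.preimage_iUnion]
      rfl
    simp only [hset]
    exact measure_iInter_iUnion_le (fun i k l hkl ω hω => (hx i hkl).trans_lt hω) fun k => hX _
  · push Not at hne
    obtain ⟨i, hi⟩ := hne
    have hempty : {ω | t i < f i (X i ω)} = ∅ := by
      rw [← Set.preimage_empty (f := X i), ← hi]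
      rfl
    exact (measure_mono_null (Set.iInter_subset _ i) (by rw [hempty, measure_empty])).trans_le
      zero_le

-- The layer cake formula, applied in every coordinate, reduces products to joint upper tails.
theorem IsUpperEND.lintegral_prod_le [SFinite P] (hX : IsUpperEND P K X)
    (hm : ∀ i, AEMeasurable (X i) P) (h0 : ∀ i, 0 ≤ X i) :
    ∫⁻ ω, ∏ i, ENNReal.ofReal (X i ω) ∂P ≤ K * ∏ i, ∫⁻ ω, ENNReal.ofReal (X i ω) ∂P := by
  set ν : Measure ℝ := volume.restrict (Set.Ioi 0)
  have hbox : AEMeasurable (Function.uncurry fun ω (t : ι → ℝ) =>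
      (⋂ i, {ω | t i < X i ω}).indicator (1 : Ω → ℝ≥0∞) ω) (P.prod (Measure.pi fun _ => ν)) := by
    refine aemeasurable_one.indicator₀ (s := {p : Ω × (ι → ℝ) | p.1 ∈ ⋂ i, {ω | p.2 i < X i ω}}) ?_
    simp only [Set.mem_iInter, Set.mem_ofPred_eq, Set.ofPred_forall]
    exact .iInter fun i => nullMeasurableSet_lt
      ((measurable_pi_apply i).comp measurable_snd).aemeasurable (hm i).comp_fst
  have hcorner : ∀ t : ι → ℝ, NullMeasurableSet (⋂ i, {ω | t i < X i ω}) P := fun t =>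
    .iInter fun i => nullMeasurableSet_lt aemeasurable_const (hm i)
  have htail : ∀ i, Measurable fun t => P {ω | t < X i ω} := fun i =>
    Antitone.measurable fun s t hst => measure_mono fun ω hω => hst.trans_lt hω
  calc ∫⁻ ω, ∏ i, ENNReal.ofReal (X i ω) ∂P
      = ∫⁻ ω, ∏ i, ν (Set.Iio (X i ω)) ∂P := by
        simp only [ν, Measure.restrict_apply measurableSet_Iio, Set.Iio_inter_Ioi,
          Real.volume_Ioo, sub_zero]
    _ = ∫⁻ ω, ∫⁻ t, (⋂ i, {ω | t i < X i ω}).indicator 1 ω ∂Measure.pi (fun _ => ν) ∂P := by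
        refine lintegral_congr fun ω => ?_
        rw [← Measure.pi_pi, ← lintegral_indicator_one (.univ_pi fun i => measurableSet_Iio)]
        simp only [Set.indicator, Set.mem_univ_pi, Set.mem_iInter, Set.mem_Iio, Set.mem_ofPred_eq,
          Pi.one_apply]
    _ = ∫⁻ t, P (⋂ i, {ω | t i < X i ω}) ∂Measure.pi fun _ => ν := by
        rw [lintegral_lintegral_swap hbox]
        exact lintegral_congr fun t => lintegral_indicator_one₀ (hcorner t)
    _ ≤ ∫⁻ t, K * ∏ i, P {ω | t i < X i ω} ∂Measure.pi fun _ => ν :=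
        lintegral_mono fun t => hX t
    _ = K * ∏ i, ∫⁻ t, P {ω | t < X i ω} ∂ν := by
        rw [lintegral_const_mul' _ _ ENNReal.coe_ne_top,
          lintegral_fintype_prod_eq_prod_lintegral _ htail]
    _ = K * ∏ i, ∫⁻ ω, ENNReal.ofReal (X i ω) ∂P := by
        congr! 2 with i
        exact (lintegral_eq_lintegral_meas_lt P (ae_of_all _ (h0 i)) (hm i)).symm

end UpperEND

section ExponentialInequality

variable {Ω ι : Type*} [MeasurableSpace Ω] [Fintype ι] {P : Measure Ω} {K : ℝ≥0}

theorem exp_le_one_add_add_sq_mul_exp {x : ℝ} (hx : 0 ≤ x) :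
    Real.exp x ≤ 1 + x + x ^ 2 * Real.exp x := by
  have hinv : Real.exp x * Real.exp (-x) = 1 := by
    rw [← Real.exp_add, add_neg_cancel, Real.exp_zero]
  have hsub : Real.exp x - 1 ≤ x * Real.exp x := by
    nlinarith [Real.one_sub_le_exp_neg x, Real.exp_pos x]
  nlinarith

theorem integrable_sq_of_nonneg_of_le [IsFiniteMeasure P] {W : Ω → ℝ} (hm : AEMeasurable W P)
    (h0 : 0 ≤ W) {b : ℝ} (hb : ∀ ω, W ω ≤ b) : Integrable (fun ω => W ω ^ 2) P :=
  .of_bound (hm.pow_const 2).aestronglyMeasurable (b ^ 2) <| ae_of_all _ fun ω => by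
    rw [Real.norm_of_nonneg (sq_nonneg _)]
    exact pow_le_pow_left₀ (h0 ω) (hb ω) 2

theorem integrable_min_sq [IsFiniteMeasure P] {Y : Ω → ℝ} (hm : AEMeasurable Y P) (h0 : 0 ≤ Y)
    {a : ℝ} (ha : 0 ≤ a) : Integrable (fun ω => min (Y ω) a ^ 2) P :=
  integrable_sq_of_nonneg_of_le (hm.min aemeasurable_const) (fun ω => le_min (h0 ω) ha)
    fun _ => min_le_right _ _

theorem integral_min_sq_mono [IsFiniteMeasure P] {Y : Ω → ℝ} (hm : AEMeasurable Y P) (h0 : 0 ≤ Y)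
    {a b : ℝ} (ha : 0 ≤ a) (hab : a ≤ b) :
    ∫ ω, min (Y ω) a ^ 2 ∂P ≤ ∫ ω, min (Y ω) b ^ 2 ∂P :=
  integral_mono (integrable_min_sq hm h0 ha) (integrable_min_sq hm h0 (ha.trans hab)) fun ω =>
    pow_le_pow_left₀ (le_min (h0 ω) ha) (min_le_min_left _ hab) 2

theorem lintegral_exp_mul_le [IsProbabilityMeasure P] {W : Ω → ℝ} (hm : AEMeasurable W P)
    (h0 : 0 ≤ W) {b : ℝ} (hb : ∀ ω, W ω ≤ b) {s : ℝ} (hs : 0 ≤ s) :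
    ∫⁻ ω, ENNReal.ofReal (Real.exp (s * W ω)) ∂P ≤
      ENNReal.ofReal (Real.exp (s * ∫ ω, W ω ∂P + s ^ 2 * Real.exp (s * b) * ∫ ω, W ω ^ 2 ∂P)) := by
  have hint : Integrable W P := .of_bound hm.aestronglyMeasurable b <| ae_of_all _ fun ω => by
    rw [Real.norm_of_nonneg (h0 ω)]
    exact hb ω
  have hint2 := integrable_sq_of_nonneg_of_le hm h0 hb
  have hlin : Integrable (fun ω => 1 + s * W ω) P := (integrable_const 1).add (hint.const_mul s)
  have hbound : ∀ ω, Real.exp (s * W ω) ≤ 1 + s * W ω + s ^ 2 * Real.exp (s * b) * W ω ^ 2 := by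
    intro ω
    calc Real.exp (s * W ω) ≤ 1 + s * W ω + (s * W ω) ^ 2 * Real.exp (s * W ω) :=
          exp_le_one_add_add_sq_mul_exp (mul_nonneg hs (h0 ω))
      _ ≤ 1 + s * W ω + (s * W ω) ^ 2 * Real.exp (s * b) := by
          gcongr
          exact hb ω
      _ = 1 + s * W ω + s ^ 2 * Real.exp (s * b) * W ω ^ 2 := by ring
  calc ∫⁻ ω, ENNReal.ofReal (Real.exp (s * W ω)) ∂P
      ≤ ∫⁻ ω, ENNReal.ofReal (1 + s * W ω + s ^ 2 * Real.exp (s * b) * W ω ^ 2) ∂P :=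
        lintegral_mono fun ω => ENNReal.ofReal_le_ofReal (hbound ω)
    _ = ENNReal.ofReal (∫ ω, 1 + s * W ω + s ^ 2 * Real.exp (s * b) * W ω ^ 2 ∂P) :=
        (ofReal_integral_eq_lintegral_ofReal (hlin.add (hint2.const_mul _))
          (ae_of_all _ fun ω => (Real.exp_nonneg _).trans (hbound ω))).symm
    _ = ENNReal.ofReal (1 + (s * ∫ ω, W ω ∂P + s ^ 2 * Real.exp (s * b) * ∫ ω, W ω ^ 2 ∂P)) := by
        rw [integral_add hlin (hint2.const_mul _), integral_add (integrable_const 1)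
          (hint.const_mul s), integral_const_mul, integral_const_mul, integral_const,
          probReal_univ, one_smul, add_assoc]
    _ ≤ _ := ENNReal.ofReal_le_ofReal ((add_comm _ _).trans_le (Real.add_one_le_exp _))

theorem IsUpperEND.measureReal_le_sum_le [IsProbabilityMeasure P] {W : ι → Ω → ℝ}
    (hW : IsUpperEND P K W) (hm : ∀ i, AEMeasurable (W i) P) (h0 : ∀ i, 0 ≤ W i) {b : ℝ}
    (hb : ∀ i ω, W i ω ≤ b) {s : ℝ} (hs : 0 ≤ s) (x : ℝ) :
    P.real {ω | x ≤ ∑ i, W i ω} ≤ K * Real.exp (s * (∑ i, ∫ ω, W i ω ∂P - x) +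
      s ^ 2 * Real.exp (s * b) * ∑ i, ∫ ω, W i ω ^ 2 ∂P) := by
  have hexp : IsUpperEND P K fun i ω => Real.exp (s * W i ω) :=
    hW.comp (f := fun _ y => Real.exp (s * y)) (fun _ => Real.exp_monotone.comp
      (monotone_mul_left_of_nonneg hs)) fun _ => (by fun_prop : Continuous _).lowerSemicontinuous
  have hmexp : ∀ i, AEMeasurable (fun ω => Real.exp (s * W i ω)) P := fun i => by fun_prop
  refine ENNReal.toReal_le_of_le_ofReal (by positivity) ?_
  calc P {ω | x ≤ ∑ i, W i ω}
      ≤ ∫⁻ ω, ENNReal.ofReal (Real.exp (-(s * x))) *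
          ∏ i, ENNReal.ofReal (Real.exp (s * W i ω)) ∂P := by
        refine meas_le_lintegral₀ (by fun_prop) fun ω (hω : x ≤ _) => ?_
        rw [← ENNReal.ofReal_prod_of_nonneg fun i _ => (Real.exp_pos _).le, ← Real.exp_sum,
          ← ENNReal.ofReal_mul (Real.exp_nonneg _), ← Real.exp_add, ENNReal.one_le_ofReal,
          Real.one_le_exp_iff, ← Finset.mul_sum]
        nlinarith
    _ ≤ ENNReal.ofReal (Real.exp (-(s * x))) *
          (K * ∏ i, ∫⁻ ω, ENNReal.ofReal (Real.exp (s * W i ω)) ∂P) := by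
        rw [lintegral_const_mul' _ _ ENNReal.ofReal_ne_top]
        gcongr
        exact hexp.lintegral_prod_le hmexp fun i ω => (Real.exp_nonneg _)
    _ ≤ ENNReal.ofReal (Real.exp (-(s * x))) * (K * ∏ i, ENNReal.ofReal (Real.exp
          (s * ∫ ω, W i ω ∂P + s ^ 2 * Real.exp (s * b) * ∫ ω, W i ω ^ 2 ∂P))) := by
        gcongr with i
        exact lintegral_exp_mul_le (hm i) (h0 i) (hb i) hs
    _ = _ := by
        rw [← ENNReal.ofReal_prod_of_nonneg fun i _ => (Real.exp_pos _).le, ← Real.exp_sum,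
          mul_left_comm, ← ENNReal.ofReal_mul (Real.exp_nonneg _), ← Real.exp_add,
          ENNReal.ofReal_mul K.coe_nonneg, ENNReal.ofReal_coe_nnreal, Finset.sum_add_distrib,
          ← Finset.mul_sum, ← Finset.mul_sum]
        ring_nf

-- `ℓ = -log w / (2δ)` makes the linear term equal to `log w`, while `e^{2ℓδ} = w⁻¹` absorbs `w`.
theorem exists_neg_mul_add_sq_mul_exp_mul_le {δ w : ℝ} (hδ : 0 < δ) (hw0 : 0 < w) (hw1 : w ≤ 1) :
    ∃ l, 0 ≤ l ∧ -(2 * δ * l) + l ^ 2 * Real.exp (l * δ) * w ≤ Real.log w + 2 / δ ^ 2 := by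
  set l := -Real.log w / (2 * δ) with hl
  have hl0 : 0 ≤ l := div_nonneg (neg_nonneg.2 (Real.log_nonpos hw0.le hw1)) (by positivity)
  have hlin : 2 * δ * l = -Real.log w := by rw [hl]; field_simp
  have hexp : Real.exp (l * δ) * Real.exp (l * δ) * w = 1 := by
    calc Real.exp (l * δ) * Real.exp (l * δ) * w
        = Real.exp (l * δ) * Real.exp (l * δ) * Real.exp (Real.log w) := by rw [Real.exp_log hw0]
      _ = Real.exp (2 * δ * l + Real.log w) := by rw [← Real.exp_add, ← Real.exp_add]; ring_nf
      _ = 1 := by rw [hlin, neg_add_cancel, Real.exp_zero]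
  have hsq : (l * δ) ^ 2 ≤ 2 * Real.exp (l * δ) := by
    linarith [Real.quadratic_le_exp_of_nonneg (mul_nonneg hl0 hδ.le), mul_nonneg hl0 hδ.le]
  refine ⟨l, hl0, ?_⟩
  rw [hlin, neg_neg]
  gcongr
  rw [le_div_iff₀ (by positivity)]
  calc l ^ 2 * Real.exp (l * δ) * w * δ ^ 2 = (l * δ) ^ 2 * (Real.exp (l * δ) * w) := by ring
    _ ≤ 2 * Real.exp (l * δ) * (Real.exp (l * δ) * w) := by gcongr
    _ = 2 := by linear_combination 2 * hexp

variable {Z : ι → Ω → ℝ} {Y : Ω → ℝ}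

theorem sum_integral_comp_eq_of_identDistrib
    (hid : ∀ i, ProbabilityTheory.IdentDistrib (Z i) Y P P) {g : ℝ → ℝ} (hg : Measurable g) :
    ∑ i, ∫ ω, g (Z i ω) ∂P = Fintype.card ι * ∫ ω, g (Y ω) ∂P := by
  rw [← nsmul_eq_mul, ← Finset.card_univ]
  exact Finset.sum_eq_card_nsmul fun i _ => ((hid i).comp hg).integral_eq

theorem IsUpperEND.measureReal_le_sum_min_le [IsProbabilityMeasure P] [Nonempty ι]
    (hZ : IsUpperEND P K Z) (hid : ∀ i, ProbabilityTheory.IdentDistrib (Z i) Y P P)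
    (h0 : ∀ i, 0 ≤ Z i) (hY0 : 0 ≤ Y) (hY : Integrable Y P) {δ : ℝ} (hδ0 : 0 < δ) (hδ1 : δ ≤ 1)
    {w : ℝ} (hw0 : 0 < w) (hw1 : w ≤ 1)
    (hw : ∫ ω, min (Y ω) (Fintype.card ι) ^ 2 ∂P ≤ Fintype.card ι * w) :
    P.real {ω | Fintype.card ι * (∫ ω, Y ω ∂P + 2 * δ) ≤
      ∑ i, min (Z i ω) (δ * Fintype.card ι)} ≤ K * (Real.exp (2 / δ ^ 2) * w) := by
  set n : ℝ := (Fintype.card ι : ℝ)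
  have hn : 0 < n := Nat.cast_pos.2 Fintype.card_pos
  have hδn : 0 ≤ δ * n := by positivity
  obtain ⟨l, hl0, hl⟩ := exists_neg_mul_add_sq_mul_exp_mul_le hδ0 hw0 hw1
  have hmin : Monotone fun y => min y (δ * n) := fun _ _ h => min_le_min_right _ h
  have hW : IsUpperEND P K fun i ω => min (Z i ω) (δ * n) :=
    hZ.comp (f := fun _ y => min y (δ * n)) (fun _ => hmin)
      fun _ => (by fun_prop : Continuous _).lowerSemicontinuous
  have hmean : ∑ i, ∫ ω, min (Z i ω) (δ * n) ∂P ≤ n * ∫ ω, Y ω ∂P := by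
    rw [sum_integral_comp_eq_of_identDistrib hid hmin.measurable]
    gcongr
    exacts [hY.inf (integrable_const _), fun ω => min_le_left _ _]
  have hsq : ∑ i, ∫ ω, min (Z i ω) (δ * n) ^ 2 ∂P ≤ n * (n * w) := by
    rw [sum_integral_comp_eq_of_identDistrib hid (hmin.measurable.pow_const 2)]
    gcongr
    exact (integral_min_sq_mono hY.aemeasurable hY0 hδn (mul_le_of_le_one_left hn.le hδ1)).trans hw
  have hexponent : l / n * (∑ i, ∫ ω, min (Z i ω) (δ * n) ∂P - n * (∫ ω, Y ω ∂P + 2 * δ)) +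
      (l / n) ^ 2 * Real.exp (l / n * (δ * n)) * ∑ i, ∫ ω, min (Z i ω) (δ * n) ^ 2 ∂P ≤
      2 / δ ^ 2 + Real.log w :=
    calc _ ≤ l / n * (n * ∫ ω, Y ω ∂P - n * (∫ ω, Y ω ∂P + 2 * δ)) +
          (l / n) ^ 2 * Real.exp (l / n * (δ * n)) * (n * (n * w)) := by gcongr
      _ = -(2 * δ * l) + l ^ 2 * Real.exp (l * δ) * w := by
          field_simp
          ring
      _ ≤ 2 / δ ^ 2 + Real.log w := by linarith
  refine (hW.measureReal_le_sum_le (fun i => (hid i).aemeasurable_fst.min aemeasurable_const)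
    (fun i ω => le_min (h0 i ω) hδn) (fun i ω => min_le_right _ _)
    (div_nonneg hl0 hn.le) _).trans ?_
  nth_rw 1 [← Real.exp_log hw0]
  rw [← Real.exp_add]
  gcongr

theorem measureReal_exists_lt_le [IsProbabilityMeasure P] [Nonempty ι]
    (hid : ∀ i, ProbabilityTheory.IdentDistrib (Z i) Y P P) (hm : AEMeasurable Y P) (hY0 : 0 ≤ Y)
    {δ : ℝ} (hδ0 : 0 < δ) (hδ1 : δ ≤ 1) {w : ℝ}
    (hw : ∫ ω, min (Y ω) (Fintype.card ι) ^ 2 ∂P ≤ Fintype.card ι * w) :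
    P.real {ω | ∃ i, δ * Fintype.card ι < Z i ω} ≤ 1 / δ ^ 2 * w := by
  set n : ℝ := (Fintype.card ι : ℝ) with hn_def
  have hn : 0 < n := Nat.cast_pos.2 Fintype.card_pos
  have hδn : 0 ≤ δ * n := by positivity
  have hmarkov : (δ * n) ^ 2 * P.real {ω | δ * n < Y ω} ≤ n * w :=
    calc (δ * n) ^ 2 * P.real {ω | δ * n < Y ω}
        ≤ (δ * n) ^ 2 * P.real {ω | (δ * n) ^ 2 ≤ min (Y ω) (δ * n) ^ 2} := by
          refine mul_le_mul_of_nonneg_left (measureReal_mono fun ω (hω : δ * n < Y ω) => ?_)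
            (sq_nonneg _)
          rw [Set.mem_ofPred_eq, min_eq_right hω.le]
      _ ≤ ∫ ω, min (Y ω) (δ * n) ^ 2 ∂P :=
          mul_meas_ge_le_integral_of_nonneg (ae_of_all _ fun ω => sq_nonneg _)
            (integrable_min_sq hm hY0 hδn) _
      _ ≤ n * w := (integral_min_sq_mono hm hY0 hδn (mul_le_of_le_one_left hn.le hδ1)).trans hw
  calc P.real {ω | ∃ i, δ * n < Z i ω} = P.real (⋃ i, {ω | δ * n < Z i ω}) := by
        rw [← Set.ofPred_exists]
    _ ≤ ∑ i, P.real {ω | δ * n < Z i ω} := measureReal_iUnion_fintype_le _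
    _ = ∑ _i : ι, P.real {ω | δ * n < Y ω} := Finset.sum_congr rfl fun i _ =>
        congrArg ENNReal.toReal ((hid i).measure_mem_eq measurableSet_Ioi)
    _ = (δ * n) ^ 2 * P.real {ω | δ * n < Y ω} / (δ ^ 2 * n) := by
        rw [Finset.sum_const, Finset.card_univ, nsmul_eq_mul, ← hn_def]
        field_simp
    _ ≤ n * w / (δ ^ 2 * n) := by gcongr
    _ = 1 / δ ^ 2 * w := by field_simp

theorem IsUpperEND.measureReal_le_sum_le_of_identDistrib [IsProbabilityMeasure P] [Nonempty ι]
    (hZ : IsUpperEND P K Z) (hid : ∀ i, ProbabilityTheory.IdentDistrib (Z i) Y P P)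
    (h0 : ∀ i, 0 ≤ Z i) (hY0 : 0 ≤ Y) (hY : Integrable Y P) {δ : ℝ} (hδ0 : 0 < δ) (hδ1 : δ ≤ 1) :
    P.real {ω | Fintype.card ι * (∫ ω, Y ω ∂P + 2 * δ) ≤ ∑ i, Z i ω} ≤
      (1 / δ ^ 2 + K * Real.exp (2 / δ ^ 2)) *
        ((∫ ω, min (Y ω) (Fintype.card ι) ^ 2 ∂P + 1) / Fintype.card ι) := by
  set n : ℝ := (Fintype.card ι : ℝ)
  have hn : 0 < n := Nat.cast_pos.2 Fintype.card_pos
  set w := (∫ ω, min (Y ω) n ^ 2 ∂P + 1) / n with hw_def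
  have hw : ∫ ω, min (Y ω) n ^ 2 ∂P ≤ n * w := by
    rw [hw_def, mul_div_cancel₀ _ hn.ne']
    linarith
  have hw0 : 0 < w := div_pos (by positivity) hn
  rcases le_or_gt w 1 with hw1 | hw1
  · calc P.real {ω | n * (∫ ω, Y ω ∂P + 2 * δ) ≤ ∑ i, Z i ω}
        ≤ P.real ({ω | ∃ i, δ * n < Z i ω} ∪
            {ω | n * (∫ ω, Y ω ∂P + 2 * δ) ≤ ∑ i, min (Z i ω) (δ * n)}) := by
          refine measureReal_mono fun ω hω => or_iff_not_imp_left.2 fun hle => ?_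
          have hmin : ∀ i, min (Z i ω) (δ * n) = Z i ω := fun i =>
            min_eq_left (not_lt.1 fun hlt => hle ⟨i, hlt⟩)
          simpa only [Set.mem_ofPred_eq, hmin] using hω
      _ ≤ 1 / δ ^ 2 * w + K * (Real.exp (2 / δ ^ 2) * w) :=
          (measureReal_union_le _ _).trans <| add_le_add
            (measureReal_exists_lt_le hid hY.aemeasurable hY0 hδ0 hδ1 hw)
            (hZ.measureReal_le_sum_min_le hid h0 hY0 hY hδ0 hδ1 hw0 hw1 hw)
      _ = (1 / δ ^ 2 + K * Real.exp (2 / δ ^ 2)) * w := by ring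
  · have hδ2 : 1 ≤ 1 / δ ^ 2 := by
      rw [one_le_div (by positivity)]
      exact pow_le_one₀ hδ0.le hδ1
    calc P.real {ω | n * (∫ ω, Y ω ∂P + 2 * δ) ≤ ∑ i, Z i ω} ≤ 1 * 1 := by
          rw [one_mul]
          exact measureReal_le_one
      _ ≤ (1 / δ ^ 2 + K * Real.exp (2 / δ ^ 2)) * w := by
          gcongr
          exact hδ2.trans (le_add_of_nonneg_right (by positivity))

end ExponentialInequality

section GeometricSeries

variable {z c : ℝ}

-- `a ↦ z ^ 2 / (z + a)` decreases from `z` to `0` around `a = z`, just where the left side peaks.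
theorem min_sq_div_le_telescope {a : ℝ} (hz : 0 ≤ z) (ha : 0 < a) (hc : 1 < c) :
    min z a ^ 2 / a ≤ 4 * c / (c - 1) * (z ^ 2 / (z + a) - z ^ 2 / (z + c * a)) := by
  have : 0 < c - 1 := sub_pos.2 hc
  have hmin : min z a ≤ 2 * z * a / (z + a) := by
    rw [le_div_iff₀ (by positivity)]
    nlinarith [min_le_left z a, min_le_right z a]
  calc min z a ^ 2 / a ≤ (2 * z * a / (z + a)) ^ 2 / a := by gcongr
    _ = 4 * z ^ 2 * a * c / ((z + a) * (c * (z + a))) := by field_simp; ring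
    _ ≤ 4 * z ^ 2 * a * c / ((z + a) * (z + c * a)) := by
        gcongr
        nlinarith
    _ = 4 * c / (c - 1) * (z ^ 2 / (z + a) - z ^ 2 / (z + c * a)) := by
        have : z + c * a ≠ 0 := by positivity
        field_simp
        ring

theorem sum_min_sq_div_pow_le (hz : 0 ≤ z) (hc : 1 < c) (n : ℕ) :
    ∑ k ∈ Finset.range n, min z (c ^ k) ^ 2 / c ^ k ≤ 4 * c / (c - 1) * z := by
  have : 0 < c - 1 := sub_pos.2 hc
  calc ∑ k ∈ Finset.range n, min z (c ^ k) ^ 2 / c ^ k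
      ≤ ∑ k ∈ Finset.range n,
        4 * c / (c - 1) * (z ^ 2 / (z + c ^ k) - z ^ 2 / (z + c ^ (k + 1))) := by
        gcongr with k
        rw [pow_succ' c k]
        exact min_sq_div_le_telescope hz (by positivity) hc
    _ = 4 * c / (c - 1) * (z ^ 2 / (z + 1) - z ^ 2 / (z + c ^ n)) := by
        rw [← Finset.mul_sum, Finset.sum_range_sub' fun k => z ^ 2 / (z + c ^ k), pow_zero]
    _ ≤ 4 * c / (c - 1) * z := by
        gcongr
        have hsub : 0 ≤ z ^ 2 / (z + c ^ n) := by positivity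
        have hfirst : z ^ 2 / (z + 1) ≤ z := by
          rw [div_le_iff₀ (by positivity)]
          nlinarith
        linarith

variable {Ω : Type*} [MeasurableSpace Ω] {P : Measure Ω} {Y : Ω → ℝ}

theorem summable_integral_min_sq_div_pow [IsFiniteMeasure P] (hY : Integrable Y P) (hY0 : 0 ≤ Y)
    (hc : 1 < c) : Summable fun k : ℕ => (∫ ω, min (Y ω) (c ^ k) ^ 2 ∂P) / c ^ k := by
  have hint : ∀ k : ℕ, Integrable (fun ω => min (Y ω) (c ^ k) ^ 2 / c ^ k) P := fun k =>
    (integrable_min_sq hY.aemeasurable hY0 (by positivity)).div_const _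
  refine summable_of_sum_range_le (c := ∫ ω, 4 * c / (c - 1) * Y ω ∂P)
    (fun k => by positivity) fun n => ?_
  simp only [← integral_div]
  rw [← integral_finsetSum _ fun k _ => hint k]
  exact integral_mono (integrable_finsetSum _ fun k _ => hint k) (hY.const_mul _)
    fun ω => sum_min_sq_div_pow_le (hY0 ω) hc n

theorem summable_integral_min_sq_add_one_div_floor_pow [IsFiniteMeasure P] (hY : Integrable Y P)
    (hY0 : 0 ≤ Y) (hc : 1 < c) :
    Summable fun k : ℕ => (∫ ω, min (Y ω) ⌊c ^ k⌋₊ ^ 2 ∂P + 1) / ⌊c ^ k⌋₊ := by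
  have hgeom : Summable fun k : ℕ => 1 / c ^ k := by
    simpa only [one_div, inv_pow] using summable_geometric_of_lt_one
      (inv_nonneg.2 (zero_le_one.trans hc.le)) (inv_lt_one_of_one_lt₀ hc)
  refine .of_nonneg_of_le (fun k => by positivity) (fun k => ?_)
    (((summable_integral_min_sq_div_pow hY hY0 hc).add hgeom).mul_left 2)
  have hfloor : (⌊c ^ k⌋₊ : ℝ) ≤ c ^ k := Nat.floor_le (by positivity)
  have hhalf : c ^ k / 2 ≤ ⌊c ^ k⌋₊ := (Nat.div_two_lt_floor (one_le_pow₀ hc.le)).le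
  have hmono := integral_min_sq_mono hY.aemeasurable hY0 (Nat.cast_nonneg _) hfloor
  calc (∫ ω, min (Y ω) ⌊c ^ k⌋₊ ^ 2 ∂P + 1) / ⌊c ^ k⌋₊
      ≤ (∫ ω, min (Y ω) (c ^ k) ^ 2 ∂P + 1) / (c ^ k / 2) := by
        gcongr
    _ = 2 * ((∫ ω, min (Y ω) (c ^ k) ^ 2 ∂P) / c ^ k + 1 / c ^ k) := by
        field_simp

end GeometricSeries

section StrongLaw

variable {Ω : Type*} [MeasurableSpace Ω] {P : Measure Ω}

theorem tendsto_integral_max_neg_natCast [IsFiniteMeasure P] {Y : Ω → ℝ}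
    (hY : Integrable Y P) :
    Tendsto (fun M : ℕ => ∫ ω, max (Y ω) (-M) ∂P) atTop (nhds (∫ ω, Y ω ∂P)) := by
  refine tendsto_integral_of_dominated_convergence (fun ω => |Y ω|)
    (fun M => (hY.aemeasurable.max aemeasurable_const).aestronglyMeasurable) hY.abs
    (fun M => ae_of_all _ fun ω => ?_) (ae_of_all _ fun ω => ?_)
  · have hM : -(M : ℝ) ≤ |Y ω| := by linarith [abs_nonneg (Y ω), M.cast_nonneg (α := ℝ)]
    exact abs_le.2 ⟨(neg_abs_le _).trans (le_max_left _ _), max_le (le_abs_self _) hM⟩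
  · obtain ⟨N, hN⟩ := exists_nat_gt (-Y ω)
    refine tendsto_const_nhds.congr' ((eventually_ge_atTop N).mono fun M hM => ?_)
    have hNM : (N : ℝ) ≤ M := Nat.cast_le.2 hM
    exact (max_eq_left (by linarith)).symm

variable [IsProbabilityMeasure P] {K : ℝ≥0} {X : ℕ → Ω → ℝ}

theorem ae_eventually_sum_floor_pow_le_of_nonneg (hX : ∀ n, IsUpperEND P K fun i : Fin n => X i)
    (hid : ∀ i, ProbabilityTheory.IdentDistrib (X i) (X 0) P P) (hint : Integrable (X 0) P)
    (h0 : ∀ i, 0 ≤ X i) {c ε : ℝ} (hc : 1 < c) (hε : 0 < ε) :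
    ∀ᵐ ω ∂P, ∀ᶠ k : ℕ in atTop,
      ∑ i ∈ Finset.range ⌊c ^ k⌋₊, X i ω ≤ ⌊c ^ k⌋₊ * (∫ ω, X 0 ω ∂P + ε) := by
  set δ := min 1 (ε / 2)
  have hδ0 : 0 < δ := lt_min one_pos (half_pos hε)
  have hδε : 2 * δ ≤ ε := by linarith [min_le_right 1 (ε / 2)]
  have htail : ∀ k : ℕ,
      P {ω | ⌊c ^ k⌋₊ * (∫ ω, X 0 ω ∂P + 2 * δ) ≤ ∑ i ∈ Finset.range ⌊c ^ k⌋₊, X i ω} ≤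
      ENNReal.ofReal ((1 / δ ^ 2 + K * Real.exp (2 / δ ^ 2)) *
        ((∫ ω, min (X 0 ω) ⌊c ^ k⌋₊ ^ 2 ∂P + 1) / ⌊c ^ k⌋₊)) := by
    intro k
    have : Nonempty (Fin ⌊c ^ k⌋₊) :=
      Fin.pos_iff_nonempty.1 (Nat.floor_pos.2 (one_le_pow₀ hc.le))
    rw [← ofReal_measureReal]
    refine ENNReal.ofReal_le_ofReal ?_
    simpa only [Fintype.card_fin, Finset.sum_range] using
      (hX ⌊c ^ k⌋₊).measureReal_le_sum_le_of_identDistrib (fun i => hid i) (fun i => h0 i) (h0 0)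
        hint hδ0 (min_le_left _ _)
  have hsum := (summable_integral_min_sq_add_one_div_floor_pow hint (h0 0) hc).mul_left
    (1 / δ ^ 2 + K * Real.exp (2 / δ ^ 2))
  filter_upwards [ae_eventually_notMem
    (ne_top_of_le_ne_top hsum.tsum_ofReal_lt_top.ne (ENNReal.tsum_le_tsum htail))] with ω hω
  filter_upwards [hω] with k hk
  exact (not_le.1 hk).le.trans (by gcongr)

theorem ae_eventually_sum_floor_pow_le (hX : ∀ n, IsUpperEND P K fun i : Fin n => X i)
    (hid : ∀ i, ProbabilityTheory.IdentDistrib (X i) (X 0) P P) (hint : Integrable (X 0) P)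
    {c ε : ℝ} (hc : 1 < c) (hε : 0 < ε) :
    ∀ᵐ ω ∂P, ∀ᶠ k : ℕ in atTop,
      ∑ i ∈ Finset.range ⌊c ^ k⌋₊, X i ω ≤ ⌊c ^ k⌋₊ * (∫ ω, X 0 ω ∂P + ε) := by
  obtain ⟨M, hM⟩ := ((tendsto_integral_max_neg_natCast hint).eventually_lt_const
    (lt_add_of_pos_right _ (half_pos hε))).exists
  have hmono : Monotone fun x : ℝ => max x (-M) + M := fun x y hxy => by dsimp only; gcongr
  have hcont : Continuous fun x : ℝ => max x (-M) + M := by fun_prop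
  have hmax : Integrable (fun ω => max (X 0 ω) (-M)) P := hint.sup (integrable_const _)
  filter_upwards [ae_eventually_sum_floor_pow_le_of_nonneg (X := fun i ω => max (X i ω) (-M) + M)
    (fun n => (hX n).comp (fun _ => hmono) fun _ => hcont.lowerSemicontinuous)
    (fun i => (hid i).comp hcont.measurable) (hmax.add (integrable_const _))
    (fun i ω => neg_le_iff_add_nonneg.1 (le_max_right _ _)) hc (half_pos hε)] with ω hω
  filter_upwards [hω] with k hk
  rw [integral_add hmax (integrable_const _), integral_const, probReal_univ, one_smul,
    Finset.sum_add_distrib, Finset.sum_const, Finset.card_range, nsmul_eq_mul] at hk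
  calc ∑ i ∈ Finset.range ⌊c ^ k⌋₊, X i ω
      ≤ ∑ i ∈ Finset.range ⌊c ^ k⌋₊, max (X i ω) (-M) :=
        Finset.sum_le_sum fun i _ => le_max_left _ _
    _ ≤ ⌊c ^ k⌋₊ * (∫ ω, max (X 0 ω) (-M) ∂P + ε / 2) := by linarith
    _ ≤ ⌊c ^ k⌋₊ * (∫ ω, X 0 ω ∂P + ε) :=
        mul_le_mul_of_nonneg_left (by linarith) (Nat.cast_nonneg _)

theorem ae_tendsto_sum_floor_pow_div (hX : ∀ n, IsUpperEND P K fun i : Fin n => X i)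
    (hnX : ∀ n, IsUpperEND P K fun (i : Fin n) ω => -X i ω)
    (hid : ∀ i, ProbabilityTheory.IdentDistrib (X i) (X 0) P P) (hint : Integrable (X 0) P)
    {c : ℝ} (hc : 1 < c) :
    ∀ᵐ ω ∂P, Tendsto (fun k : ℕ => (∑ i ∈ Finset.range ⌊c ^ k⌋₊, X i ω) / ⌊c ^ k⌋₊) atTop
      (nhds (∫ ω, X 0 ω ∂P)) := by
  have hpos : ∀ j : ℕ, (0 : ℝ) < 1 / (j + 1) := fun j => Nat.one_div_pos_of_nat
  filter_upwards [ae_all_iff.2 fun j => ae_eventually_sum_floor_pow_le hX hid hint hc (hpos j),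
    ae_all_iff.2 fun j => ae_eventually_sum_floor_pow_le
      (X := fun i ω => -X i ω) hnX (fun i => (hid i).comp measurable_neg) hint.neg hc
      (hpos j)] with ω hupper hlower
  refine Metric.tendsto_nhds.2 fun ε hε => ?_
  obtain ⟨j, hj⟩ := exists_nat_one_div_lt hε
  filter_upwards [hupper j, hlower j] with k hk hnk
  have hfloor : (0 : ℝ) < ⌊c ^ k⌋₊ := Nat.cast_pos.2 (Nat.floor_pos.2 (one_le_pow₀ hc.le))
  rw [Finset.sum_neg_distrib, integral_neg] at hnk
  rw [Real.dist_eq, abs_sub_lt_iff, sub_lt_iff_lt_add, sub_lt_comm, div_lt_iff₀ hfloor,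
    lt_div_iff₀ hfloor]
  constructor <;> nlinarith

theorem ae_tendsto_sum_div_of_nonneg (hX : ∀ n, IsUpperEND P K fun i : Fin n => X i)
    (hnX : ∀ n, IsUpperEND P K fun (i : Fin n) ω => -X i ω)
    (hid : ∀ i, ProbabilityTheory.IdentDistrib (X i) (X 0) P P) (hint : Integrable (X 0) P)
    (h0 : ∀ i, 0 ≤ X i) :
    ∀ᵐ ω ∂P, Tendsto (fun n : ℕ => (∑ i ∈ Finset.range n, X i ω) / n) atTop
      (nhds (∫ ω, X 0 ω ∂P)) := by
  have hratio : ∀ j : ℕ, (1 : ℝ) < 1 + 1 / (j + 1) := fun j =>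
    lt_add_of_pos_right 1 Nat.one_div_pos_of_nat
  filter_upwards [ae_all_iff.2 fun j => ae_tendsto_sum_floor_pow_div hX hnX hid hint (hratio j)]
    with ω hω
  refine tendsto_div_of_monotone_of_tendsto_div_floor_pow _ _
    (monotone_nat_of_le_succ fun n => ?_) _ hratio ?_ hω
  · rw [Finset.sum_range_succ]
    exact le_add_of_nonneg_right (h0 n ω)
  · simpa only [add_zero] using
      tendsto_one_div_add_atTop_nhds_zero_nat.const_add (1 : ℝ)

theorem ae_tendsto_sum_max_zero_div (hX : ∀ n, IsUpperEND P K fun i : Fin n => X i)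
    (hnX : ∀ n, IsUpperEND P K fun (i : Fin n) ω => -X i ω)
    (hid : ∀ i, ProbabilityTheory.IdentDistrib (X i) (X 0) P P) (hint : Integrable (X 0) P) :
    ∀ᵐ ω ∂P, Tendsto (fun n : ℕ => (∑ i ∈ Finset.range n, max (X i ω) 0) / n) atTop
      (nhds (∫ ω, max (X 0 ω) 0 ∂P)) := by
  have hmono : Monotone fun x : ℝ => max x 0 := fun _ _ h => max_le_max_right _ h
  refine ae_tendsto_sum_div_of_nonneg (X := fun i ω => max (X i ω) 0)
    (fun n => (hX n).comp (fun _ => hmono)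
      fun _ => (by fun_prop : Continuous _).lowerSemicontinuous)
    (fun n => ?_) (fun i => (hid i).comp hmono.measurable) hint.pos_part
    fun i ω => le_max_right _ _
  simpa only [neg_neg] using (hnX n).comp (f := fun _ x => -max (-x) 0)
    (fun _ x y h => by dsimp only; gcongr)
    fun _ => (by fun_prop : Continuous _).lowerSemicontinuous

theorem ae_tendsto_sum_div (hX : ∀ n, IsUpperEND P K fun i : Fin n => X i)
    (hnX : ∀ n, IsUpperEND P K fun (i : Fin n) ω => -X i ω)
    (hid : ∀ i, ProbabilityTheory.IdentDistrib (X i) (X 0) P P) (hint : Integrable (X 0) P) :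
    ∀ᵐ ω ∂P, Tendsto (fun n : ℕ => (∑ i ∈ Finset.range n, X i ω) / n) atTop
      (nhds (∫ ω, X 0 ω ∂P)) := by
  filter_upwards [ae_tendsto_sum_max_zero_div hX hnX hid hint,
    ae_tendsto_sum_max_zero_div (X := fun i ω => -X i ω) hnX
      (fun n => by simpa only [neg_neg] using hX n)
      (fun i => (hid i).comp measurable_neg) hint.neg] with ω hpos hneg
  simpa only [← sub_div, ← Finset.sum_sub_distrib, ← integral_sub hint.pos_part hint.neg_part,
    max_zero_sub_max_neg_zero_eq_self] using hpos.sub hneg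

end StrongLaw

section Integrability

variable {Ω : Type*} [MeasurableSpace Ω] {P : Measure Ω} {K : ℝ≥0} {X : ℕ → Ω → ℝ}

theorem ofReal_le_one_add_tsum_indicator_Ici (y : ℝ) :
    ENNReal.ofReal y ≤ 1 + ∑' i : ℕ, (Set.Ici ((i : ℝ) + 1)).indicator (1 : ℝ → ℝ≥0∞) y :=
  calc ENNReal.ofReal y ≤ ENNReal.ofReal (1 + ⌊y⌋₊) :=
        ENNReal.ofReal_le_ofReal ((Nat.lt_floor_add_one y).le.trans_eq (add_comm _ _))
    _ = 1 + ∑ i ∈ Finset.range ⌊y⌋₊, 1 := by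
        rw [ENNReal.ofReal_add zero_le_one (Nat.cast_nonneg _), ENNReal.ofReal_one,
          ENNReal.ofReal_natCast, Finset.sum_const, Finset.card_range, nsmul_one]
    _ = 1 + ∑ i ∈ Finset.range ⌊y⌋₊, (Set.Ici ((i : ℝ) + 1)).indicator (1 : ℝ → ℝ≥0∞) y := by
        refine congrArg (1 + ·) (Finset.sum_congr rfl fun i hi => (Set.indicator_of_mem ?_ 1).symm)
        exact_mod_cast (Nat.le_floor_iff' i.succ_ne_zero).1 (Finset.mem_range.1 hi)
    _ ≤ _ := add_le_add_right (ENNReal.sum_le_tsum _) 1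

theorem integrable_of_tsum_measure_ne_top [IsFiniteMeasure P] {Y : Ω → ℝ} (hm : AEMeasurable Y P)
    (h : ∑' i : ℕ, P {ω | (i : ℝ) + 1 ≤ |Y ω|} ≠ ∞) : Integrable Y P := by
  have hset : ∀ i : ℕ, NullMeasurableSet {ω | (i : ℝ) + 1 ≤ |Y ω|} P := fun i =>
    nullMeasurableSet_le aemeasurable_const hm.norm
  refine ⟨hm.aestronglyMeasurable, ?_⟩
  calc ∫⁻ ω, ‖Y ω‖ₑ ∂P
      ≤ ∫⁻ ω, 1 + ∑' i : ℕ, {ω | (i : ℝ) + 1 ≤ |Y ω|}.indicator (1 : Ω → ℝ≥0∞) ω ∂P :=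
        lintegral_mono fun ω => (Real.enorm_eq_ofReal_abs _).trans_le
          (ofReal_le_one_add_tsum_indicator_Ici _)
    _ = P Set.univ + ∑' i : ℕ, P {ω | (i : ℝ) + 1 ≤ |Y ω|} := by
        rw [lintegral_add_left measurable_const, lintegral_const, one_mul,
          lintegral_tsum fun i => AEMeasurable.indicator₀ (f := 1) aemeasurable_one (hset i)]
        simp only [lintegral_indicator_one₀ (hset _)]
    _ < ∞ := ENNReal.add_lt_top.2 ⟨measure_lt_top _ _, h.lt_top⟩

-- The product bound gives `P(∀ i, x i < X i) ≤ K e^{-∑ P(X i ≤ x i)}`.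
theorem tsum_measure_le_ne_top_of_measure_forall_lt_ne_zero [IsProbabilityMeasure P]
    (hX : ∀ n, IsUpperEND P K fun i : Fin n => X i) (hm : ∀ i, AEMeasurable (X i) P) {x : ℕ → ℝ}
    (hx : P {ω | ∀ i, x i < X i ω} ≠ 0) : ∑' i, P {ω | X i ω ≤ x i} ≠ ∞ := by
  set q := P.real {ω | ∀ i, x i < X i ω}
  have hq : 0 < q := ENNReal.toReal_pos hx (measure_ne_top _ _)
  have htail : ∀ i, P.real {ω | x i < X i ω} ≤ Real.exp (-P.real {ω | X i ω ≤ x i}) := by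
    intro i
    have hcompl : {ω | x i < X i ω} = {ω | X i ω ≤ x i}ᶜ := by
      simp only [Set.compl_ofPred, not_le]
    rw [hcompl, probReal_compl_eq_one_sub₀ (nullMeasurableSet_le (hm i) aemeasurable_const)]
    exact Real.one_sub_le_exp_neg _
  have hprod : ∀ n, q ≤ K * Real.exp (-∑ i ∈ Finset.range n, P.real {ω | X i ω ≤ x i}) := by
    intro n
    calc q ≤ P.real (⋂ i : Fin n, {ω | x i < X i ω}) :=
          measureReal_mono fun ω hω => Set.mem_iInter.2 fun i => hω i
      _ ≤ K * ∏ i : Fin n, P.real {ω | x i < X i ω} := by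
          simpa [measureReal_def, ENNReal.toReal_mul, ENNReal.toReal_prod] using
            ENNReal.toReal_mono (ENNReal.mul_ne_top ENNReal.coe_ne_top
              (ENNReal.prod_ne_top fun i _ => measure_ne_top _ _)) (hX n fun i => x i)
      _ ≤ K * ∏ i : Fin n, Real.exp (-P.real {ω | X i ω ≤ x i}) := by
          gcongr with i
          exact htail i
      _ = _ := by
          rw [← Real.exp_sum, Finset.sum_neg_distrib, Finset.sum_range]
  have hsum : Summable fun i => P.real {ω | X i ω ≤ x i} := by
    refine summable_of_sum_range_le (c := K / q) (fun i => measureReal_nonneg) fun n => ?_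
    have h := hprod n
    rw [Real.exp_neg, ← div_eq_mul_inv, le_div_comm₀ hq (Real.exp_pos _)] at h
    linarith [Real.add_one_le_exp (∑ i ∈ Finset.range n, P.real {ω | X i ω ≤ x i})]
  simpa only [ofReal_measureReal (measure_ne_top P _)] using hsum.tsum_ofReal_ne_top

theorem integrable_of_measure_forall_abs_lt_ne_zero [IsProbabilityMeasure P]
    (hX : ∀ n, IsUpperEND P K fun i : Fin n => X i)
    (hnX : ∀ n, IsUpperEND P K fun (i : Fin n) ω => -X i ω)
    (hid : ∀ i, ProbabilityTheory.IdentDistrib (X i) (X 0) P P) {M : ℝ} (hM : 0 < M)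
    (h : P {ω | ∀ i : ℕ, |X i ω| < M * (i + 1)} ≠ 0) : Integrable (X 0) P := by
  have hm : ∀ i, AEMeasurable (X i) P := fun i => (hid i).aemeasurable_fst
  have hlower := tsum_measure_le_ne_top_of_measure_forall_lt_ne_zero hX hm
    (x := fun i => -(M * (i + 1))) fun h0 => h <| measure_mono_null
      (fun ω hω i => (abs_lt.1 (hω i)).1) h0
  have hupper := tsum_measure_le_ne_top_of_measure_forall_lt_ne_zero hnX (fun i => (hm i).neg)
    (x := fun i => -(M * (i + 1))) fun h0 => h <| measure_mono_null
      (fun ω hω i => neg_lt_neg (abs_lt.1 (hω i)).2) h0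
  have hscaled : Integrable (fun ω => M⁻¹ * X 0 ω) P := by
    refine integrable_of_tsum_measure_ne_top ((hm 0).const_mul _) <|
      ne_top_of_le_ne_top (ENNReal.add_ne_top.2 ⟨hlower, hupper⟩) ?_
    rw [← ENNReal.tsum_add]
    refine ENNReal.tsum_le_tsum fun i => ?_
    calc P {ω | (i : ℝ) + 1 ≤ |M⁻¹ * X 0 ω|} = P {ω | M * (i + 1) ≤ |X 0 ω|} := by
          simp only [abs_mul, abs_inv, abs_of_pos hM, le_inv_mul_iff₀ hM]
      _ = P {ω | M * (i + 1) ≤ |X i ω|} :=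
          ((hid i).measure_mem_eq (measurableSet_le measurable_const measurable_norm)).symm
      _ ≤ P {ω | X i ω ≤ -(M * (i + 1))} + P {ω | -X i ω ≤ -(M * (i + 1))} := by
          refine (measure_mono fun ω hω => ?_).trans (measure_union_le _ _)
          rcases le_abs'.1 (Set.mem_ofPred.1 hω) with hlow | hup
          exacts [Or.inl hlow, Or.inr (neg_le_neg hup)]
  exact (integrable_const_mul_iff (inv_pos.2 hM).ne'.isUnit _).1 hscaled

theorem exists_forall_abs_lt_of_limsup_ne_top {x : ℕ → ℝ}
    (h : limsup (fun n : ℕ => ((|∑ k ∈ Finset.range n, x k| / n : ℝ) : EReal)) atTop ≠ ⊤) :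
    ∃ M : ℕ, ∀ i : ℕ, |x i| < (M + 1 : ℝ) * (i + 1) := by
  obtain ⟨B, hB, -⟩ := EReal.lt_iff_exists_real_btwn.1 h.lt_top
  have hbdd : IsBoundedUnder (· ≤ ·) atTop fun n : ℕ => |∑ k ∈ Finset.range n, x k| / n :=
    ⟨B, eventually_map.2 <| (eventually_lt_of_limsup_lt hB).mono fun n hn =>
      (EReal.coe_lt_coe_iff.1 hn).le⟩
  obtain ⟨C, hC⟩ := hbdd.bddAbove_range
  have hS : ∀ n : ℕ, |∑ k ∈ Finset.range n, x k| ≤ C * n := by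
    rintro (_ | n)
    · simp
    · exact (div_le_iff₀ (by positivity)).1 (hC ⟨n + 1, rfl⟩)
  obtain ⟨M, hM⟩ := exists_nat_gt (2 * C)
  have hC0 : 0 ≤ C := by simpa using (abs_nonneg _).trans (hS 1)
  refine ⟨M, fun i => ?_⟩
  calc |x i| = |∑ k ∈ Finset.range (i + 1), x k - ∑ k ∈ Finset.range i, x k| := by
        rw [Finset.sum_range_succ, add_sub_cancel_left]
    _ ≤ |∑ k ∈ Finset.range (i + 1), x k| + |∑ k ∈ Finset.range i, x k| := abs_sub _ _
    _ ≤ C * (i + 1 : ℕ) + C * i := add_le_add (hS _) (hS _)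
    _ ≤ 2 * C * (i + 1) := by push_cast; linarith
    _ < (M + 1 : ℝ) * (i + 1) := by gcongr; linarith

theorem integrable_of_frequently_limsup_ne_top [IsProbabilityMeasure P]
    (hX : ∀ n, IsUpperEND P K fun i : Fin n => X i)
    (hnX : ∀ n, IsUpperEND P K fun (i : Fin n) ω => -X i ω)
    (hid : ∀ i, ProbabilityTheory.IdentDistrib (X i) (X 0) P P)
    (h : ∃ᵐ ω ∂P, limsup (fun n : ℕ =>
      ((|∑ k ∈ Finset.range n, X k ω| / n : ℝ) : EReal)) atTop ≠ ⊤) :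
    Integrable (X 0) P := by
  obtain ⟨M, hM⟩ : ∃ M : ℕ, P {ω | ∀ i : ℕ, |X i ω| < (M + 1 : ℝ) * (i + 1)} ≠ 0 := by
    by_contra! hzero
    have hnull : ∀ᵐ ω ∂P, ∀ M : ℕ, ¬∀ i : ℕ, |X i ω| < (M + 1 : ℝ) * (i + 1) :=
      ae_all_iff.2 fun M => measure_eq_zero_iff_ae_notMem.1 (hzero M)
    obtain ⟨ω, hω, hnω⟩ := (h.and_eventually hnull).exists
    obtain ⟨M, hM⟩ := exists_forall_abs_lt_of_limsup_ne_top hω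
    exact hnω M hM
  exact integrable_of_measure_forall_abs_lt_ne_zero hX hnX hid (by positivity) hM

theorem limsup_abs_ne_top_of_tendsto {u : ℕ → ℝ} {a : ℝ} (h : Tendsto u atTop (nhds a)) :
    limsup (fun n => ((|u n| : ℝ) : EReal)) atTop ≠ ⊤ := by
  have habs : Tendsto (fun n => ((|u n| : ℝ) : EReal)) atTop (nhds ((|a| : ℝ) : EReal)) :=
    (continuous_coe_real_ereal.tendsto _).comp h.abs
  rw [habs.limsup_eq]
  exact EReal.coe_ne_top _

end Integrability

section ENDProb

theorem measure_iInter_fin_le_of_measure_iInter_range_le {Ω α : Type*} [MeasurableSpace Ω]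
    [Zero α] {P : Measure Ω} {c : ℝ≥0∞} {A : ℕ → α → Set Ω} {n : ℕ}
    (h : ∀ x : ℕ → α, P (⋂ i ∈ Finset.range n, A i (x i)) ≤
      c * ∏ i ∈ Finset.range n, P (A i (x i)))
    (x : Fin n → α) : P (⋂ i : Fin n, A i (x i)) ≤ c * ∏ i : Fin n, P (A i (x i)) := by
  obtain ⟨y, rfl⟩ : ∃ y : ℕ → α, x = fun i : Fin n => y i :=
    ⟨Function.extend Fin.val x 0, funext fun i => (Fin.val_injective.extend_apply x 0 i).symm⟩
  have hset : ⋂ i : Fin n, A i (y i) = ⋂ i ∈ Finset.range n, A i (y i) := by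
    ext ω
    simp only [Set.mem_iInter, Fin.forall_iff, Finset.mem_range]
  rw [hset, ← Finset.prod_range fun i => P (A i (y i))]
  exact h y

variable {Ω : Type} [MeasurableSpace Ω] {P : Measure Ω} {K : ℝ} {X : ℕ → Ω → ℝ}

theorem ENDProb.isUpperEND (h : ENDProb P K X) (n : ℕ) :
    IsUpperEND P K.toNNReal fun i : Fin n => X i :=
  measure_iInter_fin_le_of_measure_iInter_range_le (A := fun i t => {ω | t < X i ω})
    fun x => (h n x).2

theorem ENDProb.isUpperEND_neg (h : ENDProb P K X) (n : ℕ) :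
    IsUpperEND P K.toNNReal fun (i : Fin n) ω => -X i ω :=
  isUpperEND_neg_of_measure_iInter_le <|
    measure_iInter_fin_le_of_measure_iInter_range_le (A := fun i t => {ω | X i ω ≤ t})
      fun x => (h n x).1

end ENDProb

/-- Corollary 4.6, converse part: if the limsup of `|S_n|/n` is not a.s.
infinite, then `X₁` is integrable; and if `S_n/n → μ` with positive
probability, then `X₁` is integrable, `μ = E[X₁]` and the convergence holds
with probability one. -/
theorem stmt14 {Ω : Type} [MeasurableSpace Ω] (P : Measure Ω)
    [IsProbabilityMeasure P] (X : ℕ → Ω → ℝ)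
    (K : ℝ) (hK : 1 ≤ K)
    (hid : ∀ i, ProbabilityTheory.IdentDistrib (X i) (X 0) P P)
    (hEND : ENDProb P K X) :
    (P {ω | limsup (fun n : ℕ =>
        ((|∑ k ∈ Finset.range n, X k ω| / n : ℝ) : EReal)) atTop = ⊤} < 1 →
      Integrable (X 0) P) ∧
    (∀ μ : ℝ,
      0 < P {ω | Tendsto (fun n : ℕ => (∑ k ∈ Finset.range n, X k ω) / n)
          atTop (nhds μ)} →
      Integrable (X 0) P ∧ μ = ∫ ω, X 0 ω ∂P ∧
        P {ω | Tendsto (fun n : ℕ => (∑ k ∈ Finset.range n, X k ω) / n)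
            atTop (nhds μ)} = 1) := by
  have hX := hEND.isUpperEND
  have hnX := hEND.isUpperEND_neg
  constructor
  · intro h
    refine integrable_of_frequently_limsup_ne_top hX hnX hid fun hae => h.ne ?_
    exact (measure_congr (eventuallyEq_univ.2 (hae.mono fun _ => not_not.1))).trans measure_univ
  · intro μ hμ
    have hfreq : ∃ᵐ ω ∂P, Tendsto (fun n : ℕ => (∑ k ∈ Finset.range n, X k ω) / n)
        atTop (nhds μ) := frequently_ae_iff.2 hμ.ne'
    have hint : Integrable (X 0) P := integrable_of_frequently_limsup_ne_top hX hnX hid <|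
      hfreq.mono fun ω hω => by
        simpa only [abs_div, Nat.abs_cast] using limsup_abs_ne_top_of_tendsto hω
    have hlaw := ae_tendsto_sum_div hX hnX hid hint
    obtain ⟨ω, hω, hmean⟩ := (hfreq.and_eventually hlaw).exists
    obtain rfl := tendsto_nhds_unique hω hmean
    exact ⟨hint, rfl, (measure_congr (eventuallyEq_univ.2 hlaw)).trans measure_univ⟩
end
end

section
/- Let X be a random variable in a sub-linear expectation space with C_𝕍(|X|) < ∞. Then (a) Σ_{j=1}^∞ 𝔼[(|X| ∧ j)²]/j² < ∞; and (b) if furthermore lim_{c→∞} 𝔼[|X| ∧ c] = 𝔼[|X|], then 𝔼[|X|] ≤ C_𝕍(|X|). -/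
open Filter MeasureTheory
open scoped ENNReal NNReal

noncomputable section

/-- A sub-linear expectation on `Ω`: a monotone, constant-preserving, sub-additive,
positively homogeneous functional on real random variables (with values in the
extended reals, so that random variables without a finite expectation are allowed). -/
structure SublinearExp (Ω : Type) where
  E : (Ω → ℝ) → EReal
  mono : ∀ X Y : Ω → ℝ, (∀ ω, X ω ≤ Y ω) → E X ≤ E Y
  const_eq : ∀ c : ℝ, E (fun _ => c) = (c : EReal)
  subadd : ∀ X Y : Ω → ℝ, E (fun ω => X ω + Y ω) ≤ E X + E Y
  pos_homog : ∀ lam : ℝ, 0 ≤ lam → ∀ X : Ω → ℝ,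
    E (fun ω => lam * X ω) = (lam : EReal) * E X

namespace SublinearExp

variable {Ω : Type}

/-- The conjugate expectation `ℰ[X] := −𝔼[−X]`. -/
def cE (SL : SublinearExp Ω) (X : Ω → ℝ) : EReal := - SL.E fun ω => - X ω

/-- The upper capacity `𝕍(A) := inf{𝔼[ξ] : 1_A ≤ ξ}`. -/
def V (SL : SublinearExp Ω) (A : Set Ω) : ℝ :=
  sInf {x : ℝ | ∃ ξ : Ω → ℝ,
    (∀ ω, A.indicator (fun _ => (1 : ℝ)) ω ≤ ξ ω) ∧ SL.E ξ = (x : EReal)}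

/-- The lower capacity `𝓋(A) := 1 − 𝕍(Aᶜ)`. -/
def vLow (SL : SublinearExp Ω) (A : Set Ω) : ℝ := 1 - SL.V Aᶜ

/-- The Choquet integral `C_𝕍(X) := ∫₀^∞ 𝕍(X ≥ t) dt` (of a non-negative r.v.). -/
def Choquet (SL : SublinearExp Ω) (X : Ω → ℝ) : ℝ≥0∞ :=
  ∫⁻ t in Set.Ioi (0 : ℝ), ENNReal.ofReal (SL.V {ω | t ≤ X ω})

/-- The outer capacity `𝕍*(A) := inf{Σ_n 𝕍(A_n) : A ⊆ ∪_n A_n}`. -/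
def Vout (SL : SublinearExp Ω) (A : Set Ω) : ℝ≥0∞ :=
  ⨅ (B : ℕ → Set Ω) (_ : A ⊆ ⋃ n, B n), ∑' n, ENNReal.ofReal (SL.V (B n))

/-- The upper capacity is continuous: continuous from below and from above. -/
def ContinuousCapacity (SL : SublinearExp Ω) : Prop :=
  (∀ A : ℕ → Set Ω, Monotone A →
    Tendsto (fun n => SL.V (A n)) atTop (nhds (SL.V (⋃ n, A n)))) ∧
  (∀ A : ℕ → Set Ω, Antitone A →
    Tendsto (fun n => SL.V (A n)) atTop (nhds (SL.V (⋂ n, A n))))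

/-- Bounded Lipschitz function on ℝ. -/
def IsBLip (g : ℝ → ℝ) : Prop :=
  (∃ L : NNReal, LipschitzWith L g) ∧ ∃ M : ℝ, ∀ x, |g x| ≤ M

/-- Local Lipschitz function on ℝ: `|φ(x) − φ(y)| ≤ C(1+|x|^m+|y|^m)|x−y|`. -/
def IsLocLip (φ : ℝ → ℝ) : Prop :=
  ∃ (C : ℝ) (m : ℕ), ∀ x y : ℝ, |φ x - φ y| ≤ C * (1 + |x| ^ m + |y| ^ m) * |x - y|

/-- Upper extended negative dependence (finite family) with dominating constant `K`:
`𝔼[∏ g_i(X_i)] ≤ K ∏ 𝔼[g_i(X_i)]` for all non-negative bounded Lipschitz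
non-decreasing `g_i`.  (Expectations of bounded functions are finite, whence
the `toReal`.) -/
def UENDFin (SL : SublinearExp Ω) (K : ℝ) {n : ℕ} (X : Fin n → Ω → ℝ) : Prop :=
  ∀ g : Fin n → ℝ → ℝ, (∀ i, IsBLip (g i)) → (∀ i, Monotone (g i)) →
    (∀ i x, 0 ≤ g i x) →
    SL.E (fun ω => ∏ i, g i (X i ω)) ≤
      ((K * ∏ i, (SL.E fun ω => g i (X i ω)).toReal : ℝ) : EReal)

/-- Upper extended negative dependence for a sequence. -/
def UEND (SL : SublinearExp Ω) (K : ℝ) (X : ℕ → Ω → ℝ) : Prop :=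
  ∀ n : ℕ, ∀ g : ℕ → ℝ → ℝ, (∀ i, IsBLip (g i)) → (∀ i, Monotone (g i)) →
    (∀ i x, 0 ≤ g i x) →
    SL.E (fun ω => ∏ i ∈ Finset.range n, g i (X i ω)) ≤
      ((K * ∏ i ∈ Finset.range n, (SL.E fun ω => g i (X i ω)).toReal : ℝ) : EReal)

/-- Lower extended negative dependence for a sequence. -/
def LEND (SL : SublinearExp Ω) (K : ℝ) (X : ℕ → Ω → ℝ) : Prop :=
  ∀ n : ℕ, ∀ g : ℕ → ℝ → ℝ, (∀ i, IsBLip (g i)) → (∀ i, Antitone (g i)) →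
    (∀ i x, 0 ≤ g i x) →
    SL.E (fun ω => ∏ i ∈ Finset.range n, g i (X i ω)) ≤
      ((K * ∏ i ∈ Finset.range n, (SL.E fun ω => g i (X i ω)).toReal : ℝ) : EReal)

/-- Extended negative dependence = upper and lower END. -/
def END (SL : SublinearExp Ω) (K : ℝ) (X : ℕ → Ω → ℝ) : Prop :=
  UEND SL K X ∧ LEND SL K X

/-- Upper extended negative dependence under the conjugate expectation `ℰ`
(finite family). -/
def UENDFinConj (SL : SublinearExp Ω) (K : ℝ) {n : ℕ} (X : Fin n → Ω → ℝ) : Prop :=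
  ∀ g : Fin n → ℝ → ℝ, (∀ i, IsBLip (g i)) → (∀ i, Monotone (g i)) →
    (∀ i x, 0 ≤ g i x) →
    SL.cE (fun ω => ∏ i, g i (X i ω)) ≤
      ((K * ∏ i, (SL.cE fun ω => g i (X i ω)).toReal : ℝ) : EReal)

/-- Upper extended negative dependence under the conjugate expectation (sequence). -/
def UENDconj (SL : SublinearExp Ω) (K : ℝ) (X : ℕ → Ω → ℝ) : Prop :=
  ∀ n : ℕ, ∀ g : ℕ → ℝ → ℝ, (∀ i, IsBLip (g i)) → (∀ i, Monotone (g i)) →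
    (∀ i x, 0 ≤ g i x) →
    SL.cE (fun ω => ∏ i ∈ Finset.range n, g i (X i ω)) ≤
      ((K * ∏ i ∈ Finset.range n, (SL.cE fun ω => g i (X i ω)).toReal : ℝ) : EReal)

/-- Lower extended negative dependence under the conjugate expectation (sequence). -/
def LENDconj (SL : SublinearExp Ω) (K : ℝ) (X : ℕ → Ω → ℝ) : Prop :=
  ∀ n : ℕ, ∀ g : ℕ → ℝ → ℝ, (∀ i, IsBLip (g i)) → (∀ i, Antitone (g i)) →
    (∀ i x, 0 ≤ g i x) →
    SL.cE (fun ω => ∏ i ∈ Finset.range n, g i (X i ω)) ≤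
      ((K * ∏ i ∈ Finset.range n, (SL.cE fun ω => g i (X i ω)).toReal : ℝ) : EReal)

/-- Extended negative dependence under the conjugate expectation. -/
def ENDconj (SL : SublinearExp Ω) (K : ℝ) (X : ℕ → Ω → ℝ) : Prop :=
  UENDconj SL K X ∧ LENDconj SL K X

/-- Extended independence of a sequence:
`𝔼[∏ ψ_i(X_i)] = ∏ 𝔼[ψ_i(X_i)]` for non-negative local Lipschitz `ψ_i`,
whenever the expectations involved are finite. -/
def ExtIndep (SL : SublinearExp Ω) (X : ℕ → Ω → ℝ) : Prop :=
  ∀ n : ℕ, ∀ ψ : ℕ → ℝ → ℝ, (∀ i, IsLocLip (ψ i)) → (∀ i x, 0 ≤ ψ i x) →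
    (∀ i ∈ Finset.range n, SL.E (fun ω => ψ i (X i ω)) ≠ ⊤) →
    SL.E (fun ω => ∏ i ∈ Finset.range n, ψ i (X i ω)) =
      ((∏ i ∈ Finset.range n, (SL.E fun ω => ψ i (X i ω)).toReal : ℝ) : EReal)

/-- Extended independence of two random variables. -/
def ExtIndepPair (SL : SublinearExp Ω) (Y Z : Ω → ℝ) : Prop :=
  ∀ ψ₁ ψ₂ : ℝ → ℝ, IsLocLip ψ₁ → IsLocLip ψ₂ →
    (∀ x, 0 ≤ ψ₁ x) → (∀ x, 0 ≤ ψ₂ x) →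
    SL.E (fun ω => ψ₁ (Y ω)) ≠ ⊤ → SL.E (fun ω => ψ₂ (Z ω)) ≠ ⊤ →
    SL.E (fun ω => ψ₁ (Y ω) * ψ₂ (Z ω)) =
      (((SL.E fun ω => ψ₁ (Y ω)).toReal * (SL.E fun ω => ψ₂ (Z ω)).toReal : ℝ) : EReal)

/-- Identically distributed: `𝔼[φ(X_i)] = 𝔼[φ(X_1)]` for all local Lipschitz `φ`. -/
def IdentDist (SL : SublinearExp Ω) (X : ℕ → Ω → ℝ) : Prop :=
  ∀ (i : ℕ) (φ : ℝ → ℝ), IsLocLip φ →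
    SL.E (fun ω => φ (X i ω)) = SL.E fun ω => φ (X 0 ω)

end SublinearExp

/-!
The argument rests on a discrete layer-cake inequality. Raising the truncation level of `Y` from
`s` to `t` increases `Y ∧ s` by at most `(t - s) 𝟙{s ≤ Y}`, so for levels `t₀ ≤ t₁ ≤ ⋯`
sub-linearity gives `𝔼[Y ∧ tₙ] ≤ t₀ + ∑_{i<n} (tᵢ₊₁ - tᵢ) 𝕍(tᵢ ≤ Y)`.

With `tᵢ = ε(i + 1)` the sum is a lower Riemann sum of the Choquet integral, and `ε → 0` yields
`𝔼[Y ∧ c] ≤ C_𝕍(Y)`, hence (b).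

With `tᵢ = i²` and `Y²` in place of `Y` it reads `𝔼[(Y ∧ n)²] ≤ ∑_{i<n} (2i + 1) 𝕍(i ≤ Y)`. After
division by `n²` and an exchange of summations, the tail `∑_{n>i} n⁻² ≤ 2/(i + 1)` absorbs the
weight `2i + 1`, and `∑ᵢ 𝕍(i ≤ Y)` converges by comparison with the Choquet integral, hence (a).
-/

lemma sum_mul_le_setLIntegral_of_antitone {f : ℝ → ℝ≥0∞} (hf : Antitone f) {t : ℕ → ℝ}
    (ht : Monotone t) (n : ℕ) :
    ∑ i ∈ Finset.range n, ENNReal.ofReal (t (i + 1) - t i) * f (t (i + 1)) ≤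
      ∫⁻ s in Set.Ioc (t 0) (t n), f s := by
  induction n with
  | zero => simp
  | succ n ih =>
    have hstep : ENNReal.ofReal (t (n + 1) - t n) * f (t (n + 1)) ≤
        ∫⁻ s in Set.Ioc (t n) (t (n + 1)), f s := by
      rw [← Real.volume_Ioc, mul_comm, ← setLIntegral_const]
      exact setLIntegral_mono' measurableSet_Ioc fun s hs => hf hs.2
    rw [Finset.sum_range_succ, ← Set.Ioc_union_Ioc_eq_Ioc (ht n.zero_le) (ht n.le_succ),
      lintegral_union measurableSet_Ioc (Set.Ioc_disjoint_Ioc_of_le le_rfl)]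
    exact add_le_add ih hstep

lemma sum_sum_two_mul_add_one_mul_div_sq_le {v : ℕ → ℝ} (hv : 0 ≤ v) (n : ℕ) :
    ∑ j ∈ Finset.range n, (∑ i ∈ Finset.range j, (2 * (i : ℝ) + 1) * v i) / (j : ℝ) ^ 2 ≤
      4 * ∑ i ∈ Finset.range n, v i := by
  have htail (i : ℕ) :
      (2 * (i : ℝ) + 1) * v i * ∑ j ∈ Finset.Ioo i n, ((j : ℝ) ^ 2)⁻¹ ≤ 4 * v i := by
    have hvi : 0 ≤ v i := hv i
    calc (2 * (i : ℝ) + 1) * v i * ∑ j ∈ Finset.Ioo i n, ((j : ℝ) ^ 2)⁻¹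
        ≤ (2 * (i : ℝ) + 1) * v i * (2 / (i + 1)) := by
          gcongr
          exact sum_Ioo_inv_sq_le i n
      _ ≤ 4 * v i := by
          rw [mul_div_assoc', div_le_iff₀ (by positivity)]
          nlinarith
  calc ∑ j ∈ Finset.range n, (∑ i ∈ Finset.range j, (2 * (i : ℝ) + 1) * v i) / (j : ℝ) ^ 2
      = ∑ j ∈ Finset.range n, ∑ i ∈ Finset.range j,
          (2 * (i : ℝ) + 1) * v i * ((j : ℝ) ^ 2)⁻¹ := by
        simp only [div_eq_mul_inv, Finset.sum_mul]
    _ = ∑ i ∈ Finset.range n, ∑ j ∈ Finset.Ioo i n,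
          (2 * (i : ℝ) + 1) * v i * ((j : ℝ) ^ 2)⁻¹ := by
        refine Finset.sum_comm' fun j i => ?_
        simp only [Finset.mem_range, Finset.mem_Ioo]
        lia
    _ ≤ 4 * ∑ i ∈ Finset.range n, v i := by
        simp only [← Finset.mul_sum]
        rw [Finset.mul_sum]
        exact Finset.sum_le_sum fun i _ => htail i

lemma summable_sum_two_mul_add_one_mul_div_sq {v : ℕ → ℝ} (hsum : Summable v) (hv : 0 ≤ v) :
    Summable fun j : ℕ => (∑ i ∈ Finset.range j, (2 * (i : ℝ) + 1) * v i) / (j : ℝ) ^ 2 := by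
  have hweighted (i : ℕ) : 0 ≤ (2 * (i : ℝ) + 1) * v i := mul_nonneg (by positivity) (hv i)
  refine summable_of_sum_range_le (c := 4 * ∑' i, v i)
    (fun j => div_nonneg (Finset.sum_nonneg fun i _ => hweighted i) (sq_nonneg _)) fun n => ?_
  refine (sum_sum_two_mul_add_one_mul_div_sq_le hv n).trans ?_
  gcongr
  exact hsum.sum_le_tsum _ fun i _ => hv i

namespace SublinearExp

variable {Ω : Type} (SL : SublinearExp Ω)

lemma E_nonneg {X : Ω → ℝ} (hX : 0 ≤ X) : 0 ≤ SL.E X := by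
  simpa only [SL.const_eq, EReal.coe_zero] using SL.mono (fun _ => 0) X hX

lemma E_le_coe {X : Ω → ℝ} {c : ℝ} (hX : ∀ ω, X ω ≤ c) : SL.E X ≤ c := by
  simpa only [SL.const_eq] using SL.mono X (fun _ => c) hX

lemma E_indicator_one (A : Set Ω) : SL.E (A.indicator fun _ => 1) = SL.V A := by
  have hnonneg : 0 ≤ SL.E (A.indicator fun _ => 1) :=
    SL.E_nonneg (Set.indicator_nonneg fun _ _ => zero_le_one)
  have hle : SL.E (A.indicator fun _ => 1) ≤ (1 : ℝ) :=
    SL.E_le_coe fun ω => Set.indicator_le_self' (fun _ _ => zero_le_one) ω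
  have hfinite : ((SL.E (A.indicator fun _ => 1)).toReal : EReal) =
      SL.E (A.indicator fun _ => 1) :=
    EReal.coe_toReal (ne_top_of_le_ne_top (EReal.coe_ne_top 1) hle)
      (ne_bot_of_le_ne_bot EReal.zero_ne_bot hnonneg)
  have hleast : IsLeast {x : ℝ | ∃ ξ : Ω → ℝ,
      (∀ ω, A.indicator (fun _ => (1 : ℝ)) ω ≤ ξ ω) ∧ SL.E ξ = (x : EReal)}
      (SL.E (A.indicator fun _ => 1)).toReal := by
    refine ⟨⟨_, fun _ => le_rfl, hfinite.symm⟩, ?_⟩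
    rintro x ⟨ξ, hξ, hx⟩
    rw [← EReal.coe_le_coe_iff, hfinite, ← hx]
    exact SL.mono _ _ hξ
  rw [V, hleast.csInf_eq, hfinite]

lemma V_nonneg (A : Set Ω) : 0 ≤ SL.V A := by
  rw [← EReal.coe_nonneg, ← E_indicator_one]
  exact SL.E_nonneg (Set.indicator_nonneg fun _ _ => zero_le_one)

lemma V_mono : Monotone SL.V := fun A B hAB => by
  rw [← EReal.coe_le_coe_iff, ← E_indicator_one, ← E_indicator_one]
  exact SL.mono _ _ (Set.indicator_le_indicator_of_subset hAB fun _ => zero_le_one)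

lemma antitone_V_superlevel (Y : Ω → ℝ) : Antitone fun t : ℝ => SL.V {ω | t ≤ Y ω} :=
  fun _ _ hst => SL.V_mono fun _ hω => hst.trans hω

lemma E_min_le_E_min_add (Y : Ω → ℝ) {s t : ℝ} (hst : s ≤ t) :
    SL.E (fun ω => min (Y ω) t) ≤
      SL.E (fun ω => min (Y ω) s) + (((t - s) * SL.V {ω | s ≤ Y ω} : ℝ) : EReal) := by
  have hpointwise (ω : Ω) : min (Y ω) t ≤
      min (Y ω) s + (t - s) * {ω | s ≤ Y ω}.indicator (fun _ => (1 : ℝ)) ω := by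
    by_cases hω : s ≤ Y ω
    · simp [hω]
    · simp [hω, (not_le.1 hω).le]
  calc SL.E (fun ω => min (Y ω) t)
      ≤ SL.E (fun ω => min (Y ω) s) +
          SL.E (fun ω => (t - s) * {ω | s ≤ Y ω}.indicator (fun _ => (1 : ℝ)) ω) :=
        (SL.mono _ _ hpointwise).trans (SL.subadd _ _)
    _ = SL.E (fun ω => min (Y ω) s) + (((t - s) * SL.V {ω | s ≤ Y ω} : ℝ) : EReal) := by
        rw [SL.pos_homog _ (sub_nonneg.2 hst), E_indicator_one, EReal.coe_mul]

lemma E_min_le_add_sum (Y : Ω → ℝ) {t : ℕ → ℝ} (ht : Monotone t) (n : ℕ) :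
    SL.E (fun ω => min (Y ω) (t n)) ≤
      ((t 0 + ∑ i ∈ Finset.range n, (t (i + 1) - t i) * SL.V {ω | t i ≤ Y ω} : ℝ) : EReal) := by
  induction n with
  | zero => simpa using SL.E_le_coe fun ω => min_le_right (Y ω) (t 0)
  | succ n ih =>
    rw [Finset.sum_range_succ, ← add_assoc, EReal.coe_add]
    exact (SL.E_min_le_E_min_add Y (ht n.le_succ)).trans (add_le_add_left ih _)

lemma ofReal_sum_V_le_Choquet (Y : Ω → ℝ) {t : ℕ → ℝ} (ht : Monotone t) (ht0 : 0 ≤ t 0) (n : ℕ) :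
    ENNReal.ofReal (∑ i ∈ Finset.range n, (t (i + 1) - t i) * SL.V {ω | t (i + 1) ≤ Y ω}) ≤
      SL.Choquet Y := by
  have hgap (i : ℕ) : 0 ≤ t (i + 1) - t i := sub_nonneg.2 (ht i.le_succ)
  have hanti : Antitone fun s : ℝ => ENNReal.ofReal (SL.V {ω | s ≤ Y ω}) :=
    fun _ _ hrs => ENNReal.ofReal_le_ofReal (SL.antitone_V_superlevel Y hrs)
  calc ENNReal.ofReal (∑ i ∈ Finset.range n, (t (i + 1) - t i) * SL.V {ω | t (i + 1) ≤ Y ω})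
      = ∑ i ∈ Finset.range n,
          ENNReal.ofReal (t (i + 1) - t i) * ENNReal.ofReal (SL.V {ω | t (i + 1) ≤ Y ω}) := by
        rw [ENNReal.ofReal_sum_of_nonneg fun i _ => mul_nonneg (hgap i) (SL.V_nonneg _)]
        simp only [ENNReal.ofReal_mul (hgap _)]
    _ ≤ ∫⁻ s in Set.Ioc (t 0) (t n), ENNReal.ofReal (SL.V {ω | s ≤ Y ω}) :=
        sum_mul_le_setLIntegral_of_antitone hanti ht n
    _ ≤ SL.Choquet Y := lintegral_mono_set fun _ hs => ht0.trans_lt hs.1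

lemma E_min_le_add_Choquet (Y : Ω → ℝ) (c : ℝ) {ε : ℝ} (hε : 0 < ε) :
    SL.E (fun ω => min (Y ω) c) ≤ ε + (SL.Choquet Y : EReal) := by
  obtain ⟨n, hn⟩ := exists_nat_ge (c / ε)
  have hc : c ≤ ε * (n + 1 : ℕ) :=
    ((div_le_iff₀' hε).1 hn).trans (by gcongr; exact n.le_succ)
  have hmono : Monotone fun i : ℕ => ε * (i : ℝ) := fun i j hij => by dsimp only; gcongr
  have hgap (i : ℕ) : ε * ((i + 1 : ℕ) : ℝ) - ε * i = ε := by push_cast; ring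
  have hlayer := SL.E_min_le_add_sum Y (t := fun i => ε * (i + 1 : ℕ))
    (fun i j hij => hmono (Nat.succ_le_succ hij)) n
  have hriemann := SL.ofReal_sum_V_le_Choquet Y hmono (by simp) n
  simp only [hgap, zero_add, Nat.cast_one, mul_one] at hlayer hriemann
  set lowerSum := ∑ i ∈ Finset.range n, ε * SL.V {ω | ε * ((i + 1 : ℕ) : ℝ) ≤ Y ω}
  have hlowerSum : (lowerSum : EReal) ≤ (SL.Choquet Y : EReal) := by
    refine le_trans ?_ (EReal.coe_ennreal_le_coe_ennreal_iff.2 hriemann)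
    exact EReal.coe_ennreal_ofReal ▸ EReal.coe_le_coe (le_max_left _ _)
  calc SL.E (fun ω => min (Y ω) c)
      ≤ SL.E (fun ω => min (Y ω) (ε * (n + 1 : ℕ))) :=
        SL.mono _ _ fun ω => min_le_min_left _ hc
    _ ≤ ((ε + lowerSum : ℝ) : EReal) := hlayer
    _ ≤ ε + (SL.Choquet Y : EReal) := by
        rw [EReal.coe_add]
        gcongr

lemma E_min_le_Choquet (Y : Ω → ℝ) (c : ℝ) :
    SL.E (fun ω => min (Y ω) c) ≤ (SL.Choquet Y : EReal) := by
  refine EReal.le_of_forall_lt_iff_le.1 fun z hz => ?_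
  obtain ⟨r, hr, hrz⟩ := EReal.lt_iff_exists_real_btwn.1 hz
  calc SL.E (fun ω => min (Y ω) c)
      ≤ ((z - r : ℝ) : EReal) + SL.Choquet Y :=
        SL.E_min_le_add_Choquet Y c (sub_pos.2 (EReal.coe_lt_coe_iff.1 hrz))
    _ ≤ ((z - r : ℝ) : EReal) + r := by gcongr
    _ = z := by rw [← EReal.coe_add, sub_add_cancel]

lemma E_le_Choquet_of_tendsto {Y : Ω → ℝ}
    (hY : Tendsto (fun c : ℝ => SL.E fun ω => min (Y ω) c) atTop (nhds (SL.E Y))) :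
    SL.E Y ≤ (SL.Choquet Y : EReal) :=
  le_of_tendsto' hY (SL.E_min_le_Choquet Y)

lemma E_min_sq_le_sum {Y : Ω → ℝ} (hY : 0 ≤ Y) (n : ℕ) :
    SL.E (fun ω => min (Y ω) (n : ℝ) ^ 2) ≤
      ((∑ i ∈ Finset.range n, (2 * (i : ℝ) + 1) * SL.V {ω | (i : ℝ) ≤ Y ω} : ℝ) : EReal) := by
  have hmono : Monotone fun i : ℕ => (i : ℝ) ^ 2 := fun i j hij => by dsimp only; gcongr
  have hgap (i : ℕ) : ((i + 1 : ℕ) : ℝ) ^ 2 - (i : ℝ) ^ 2 = 2 * i + 1 := by push_cast; ring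
  have hlevel (i : ℕ) : {ω | (i : ℝ) ^ 2 ≤ Y ω ^ 2} = {ω | (i : ℝ) ≤ Y ω} := by
    ext ω
    exact pow_le_pow_iff_left₀ i.cast_nonneg (hY ω) two_ne_zero
  have hmin (ω : Ω) : min (Y ω) (n : ℝ) ^ 2 = min (Y ω ^ 2) ((n : ℝ) ^ 2) :=
    (pow_left_monotoneOn (n := 2)).map_min (hY ω) (Nat.cast_nonneg (α := ℝ) n)
  have hlayer := SL.E_min_le_add_sum (fun ω => Y ω ^ 2) hmono n
  simp only [hgap, hlevel] at hlayer
  simpa [hmin] using hlayer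

lemma summable_V_natCast_le {Y : Ω → ℝ} (hY : SL.Choquet Y ≠ ⊤) :
    Summable fun i : ℕ => SL.V {ω | (i : ℝ) ≤ Y ω} := by
  refine (summable_nat_add_iff 1).1 (summable_of_sum_range_le (c := (SL.Choquet Y).toReal)
    (fun i => SL.V_nonneg _) fun n => ?_)
  rw [← ENNReal.ofReal_le_iff_le_toReal hY]
  simpa using SL.ofReal_sum_V_le_Choquet Y Nat.mono_cast (by simp) n

lemma summable_E_min_sq_div_sq {Y : Ω → ℝ} (hY : 0 ≤ Y) (hCh : SL.Choquet Y ≠ ⊤) :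
    Summable fun j : ℕ => (SL.E fun ω => min (Y ω) (j : ℝ) ^ 2).toReal / (j : ℝ) ^ 2 := by
  have hE (j : ℕ) : 0 ≤ SL.E fun ω => min (Y ω) (j : ℝ) ^ 2 :=
    SL.E_nonneg fun ω => sq_nonneg _
  refine Summable.of_nonneg_of_le
    (fun j => div_nonneg (EReal.toReal_nonneg (hE j)) (sq_nonneg _)) (fun j => ?_)
    (summable_sum_two_mul_add_one_mul_div_sq (SL.summable_V_natCast_le hCh)
      fun i => SL.V_nonneg _)
  gcongr
  exact EReal.toReal_le_toReal (SL.E_min_sq_le_sum hY j)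
    (ne_bot_of_le_ne_bot EReal.zero_ne_bot (hE j)) (EReal.coe_ne_top _)

end SublinearExp

/-- Lemma 4.7: if `C_𝕍(|X|) < ∞` then (a) `Σ_j 𝔼[(|X| ∧ j)²]/j² < ∞`, and
(b) if moreover `𝔼[|X| ∧ c] → 𝔼[|X|]` as `c → ∞`, then `𝔼[|X|] ≤ C_𝕍(|X|)`. -/
theorem stmt15 {Ω : Type} (SL : SublinearExp Ω) (X : Ω → ℝ)
    (hCh : SL.Choquet (fun ω => |X ω|) ≠ ⊤) :
    ((∀ j : ℕ, SL.E (fun ω => (min |X ω| (j : ℝ)) ^ 2) ≠ ⊤) ∧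
      Summable (fun j : ℕ =>
        (SL.E fun ω => (min |X ω| (j : ℝ)) ^ 2).toReal / (j : ℝ) ^ 2)) ∧
    (Tendsto (fun c : ℝ => SL.E fun ω => min |X ω| c) atTop
        (nhds (SL.E fun ω => |X ω|)) →
      SL.E (fun ω => |X ω|) ≤ ((SL.Choquet fun ω => |X ω|) : EReal)) := by
  have habs : 0 ≤ fun ω => |X ω| := fun ω => abs_nonneg (X ω)
  exact ⟨⟨fun j => ne_top_of_le_ne_top (EReal.coe_ne_top _) (SL.E_min_sq_le_sum habs j),
    SL.summable_E_min_sq_div_sq habs hCh⟩, SL.E_le_Choquet_of_tendsto⟩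
end
end
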